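/- arXiv:2401.02520 — 2 statements merged into one kernel-verified Lean document; each statement's English description precedes it below -/
import Mathlib

section
/- (Optimality of the separation lemma.) For every ε > 0 and every integer p ≥ 2, there exist two rank-one matrices P, Q ∈ ℝ^{p×p} with P ≠ Q, each of which can be written as a nonnegative scalar times an outer product x yᵀ of two unit vectors x, y ∈ ℝᵖ all of whose entries have absolute value at most √((1+ε)/p) (i.e., P and Q are (1+ε)-incoherent rank-one matrices), such that for Δ = P − Q one has ‖Δ‖_max² / ‖Δ‖_F² ≥ 1/(2p). -/
/-!
If `c > 0`, a vector whose squared entries all lie in `[c, μc]` normalizes to a `μ`-incoherent unit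
vector. Hence multiplying one row of the all-ones matrix by `√(1 + ε)` produces another
`(1 + ε)`-incoherent rank-one matrix. The difference `Δ` of the two is a single constant row, so
`‖Δ‖_max² / ‖Δ‖_F²` is the inverse of the row length.
-/

open Matrix
open scoped BigOperators RealInnerProductSpace

noncomputable def frobNorm {m n : Type*} [Fintype m] [Fintype n] (M : Matrix m n ℝ) : ℝ :=
  Real.sqrt (∑ i, ∑ j, (M i j) ^ 2)

noncomputable def frobInner {m n : Type*} [Fintype m] [Fintype n] (A B : Matrix m n ℝ) : ℝ :=
  ∑ i, ∑ j, A i j * B i j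

noncomputable def maxNorm {m n : Type*} [Fintype m] [Fintype n] (M : Matrix m n ℝ) : ℝ :=
  ⨆ i, ⨆ j, |M i j|

noncomputable def l0Norm {m n : Type*} (M : Matrix m n ℝ) : ℕ :=
  Set.ncard {ij : m × n | M ij.1 ij.2 ≠ 0}

noncomputable def specNorm {p q : ℕ} (M : Matrix (Fin p) (Fin q) ℝ) : ℝ :=
  ‖LinearMap.toContinuousLinearMap (Matrix.toEuclideanLin M)‖

def Incoherent {p r : ℕ} (μ : ℝ) (U : Matrix (Fin p) (Fin r) ℝ) : Prop :=
  ∀ i, Real.sqrt (∑ j, (U i j) ^ 2) ≤ Real.sqrt (μ * r / p)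

def SepProp (p r : ℕ) (μ c : ℝ) : Prop :=
  ∀ (U V L R : Matrix (Fin p) (Fin r) ℝ) (S Lam : Matrix (Fin r) (Fin r) ℝ),
    Uᵀ * U = 1 → Vᵀ * V = 1 → Lᵀ * L = 1 → Rᵀ * R = 1 →
    Incoherent μ U → Incoherent μ V → Incoherent μ L → Incoherent μ R →
    S.IsDiag → (∀ i, 0 ≤ S i i) → Lam.IsDiag → (∀ i, 0 ≤ Lam i i) →
    maxNorm (U * S * Vᵀ - L * Lam * Rᵀ) ^ 2 ≤
      (c * μ * (r : ℝ) ^ 4 / p) * frobNorm (U * S * Vᵀ - L * Lam * Rᵀ) ^ 2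

noncomputable def l1Norm {m n : Type*} [Fintype m] [Fintype n] (M : Matrix m n ℝ) : ℝ :=
  ∑ i, ∑ j, |M i j|

noncomputable def nuclearNorm {p q : ℕ} (M : Matrix (Fin p) (Fin q) ℝ) : ℝ :=
  sSup {x : ℝ | ∃ X : Matrix (Fin p) (Fin q) ℝ, specNorm X ≤ 1 ∧ x = frobInner M X}

noncomputable def Phi {p : ℕ} (lam : ℝ) (Δ : Matrix (Fin p) (Fin p) ℝ) : ℝ :=
  sInf {x : ℝ | ∃ L S : Matrix (Fin p) (Fin p) ℝ, L + S = Δ ∧ x = nuclearNorm L + lam * l1Norm S}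

section RankOneNorms

variable {m n : Type*} [Fintype m] [Fintype n]

theorem frobNorm_sq (M : Matrix m n ℝ) : frobNorm M ^ 2 = ∑ i, ∑ j, M i j ^ 2 :=
  Real.sq_sqrt (Finset.sum_nonneg fun _ _ => Finset.sum_nonneg fun _ _ => sq_nonneg _)

theorem frobNorm_vecMulVec_sq (a : m → ℝ) (b : n → ℝ) :
    frobNorm (vecMulVec a b) ^ 2 = (∑ i, a i ^ 2) * ∑ j, b j ^ 2 := by
  simp only [frobNorm_sq, vecMulVec_apply, mul_pow, Finset.sum_mul_sum]

theorem pi_norm_eq_iSup_norm {E : n → Type*} [∀ i, SeminormedAddCommGroup (E i)] (a : ∀ i, E i) :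
    ‖a‖ = ⨆ i, ‖a i‖ :=
  (PiLp.norm_toLp a).symm.trans (PiLp.norm_eq_ciSup _)

theorem maxNorm_vecMulVec (a : m → ℝ) (b : n → ℝ) : maxNorm (vecMulVec a b) = ‖a‖ * ‖b‖ := by
  simp only [maxNorm, vecMulVec_apply, abs_mul, pi_norm_eq_iSup_norm, Real.norm_eq_abs,
    ← Real.mul_iSup_of_nonneg (abs_nonneg _),
    Real.iSup_mul_of_nonneg (Real.iSup_nonneg fun j => abs_nonneg (b j))]

theorem maxNorm_sq_div_frobNorm_sq_vecMulVec_single [DecidableEq m] (i : m) {c : ℝ} (hc : c ≠ 0)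
    (b : n → ℝ) :
    maxNorm (vecMulVec (Pi.single i c) b) ^ 2 / frobNorm (vecMulVec (Pi.single i c) b) ^ 2 =
      ‖b‖ ^ 2 / ∑ j, b j ^ 2 := by
  have hsum : ∑ k, (Pi.single i c : m → ℝ) k ^ 2 = c ^ 2 := by
    simp [Pi.single_apply, ite_pow]
  rw [maxNorm_vecMulVec, frobNorm_vecMulVec_sq, hsum, Pi.norm_single, mul_pow, Real.norm_eq_abs,
    sq_abs, mul_div_mul_left _ _ (pow_ne_zero 2 hc)]

end RankOneNorms

section Incoherence

variable {m n : Type*} [Fintype m] [Fintype n] {μ : ℝ}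

/-- A `μ`-incoherent unit vector: Euclidean norm one, and no entry exceeds `√(μ / d)` in absolute
value, where `d` is the dimension. -/
def IsIncoherentUnit (μ : ℝ) (x : n → ℝ) : Prop :=
  ∑ i, x i ^ 2 = 1 ∧ ∀ i, |x i| ≤ √(μ / Fintype.card n)

/-- A `μ`-incoherent rank-one matrix `σ x yᵀ`. The scalar `σ ≥ 0` is absorbed into the left factor,
and `σ = 0` is allowed. -/
def IsIncoherentRankOne (μ : ℝ) (M : Matrix m n ℝ) : Prop :=
  ∃ (σ : ℝ) (x : m → ℝ) (y : n → ℝ),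
    0 ≤ σ ∧ IsIncoherentUnit μ x ∧ IsIncoherentUnit μ y ∧ M = vecMulVec (σ • x) y

theorem exists_smul_isIncoherentUnit {a : n → ℝ} (ha : 0 < ∑ i, a i ^ 2)
    (h : ∀ i, a i ^ 2 * Fintype.card n ≤ μ * ∑ i, a i ^ 2) :
    ∃ (s : ℝ) (x : n → ℝ), 0 ≤ s ∧ IsIncoherentUnit μ x ∧ a = s • x := by
  have hs : √(∑ i, a i ^ 2) ≠ 0 := (Real.sqrt_pos.2 ha).ne'
  have hsq (i : n) : ((√(∑ i, a i ^ 2))⁻¹ • a) i ^ 2 = a i ^ 2 / ∑ i, a i ^ 2 := by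
    rw [Pi.smul_apply, smul_eq_mul, mul_pow, inv_pow, Real.sq_sqrt ha.le, inv_mul_eq_div]
  refine ⟨√(∑ i, a i ^ 2), (√(∑ i, a i ^ 2))⁻¹ • a, Real.sqrt_nonneg _, ⟨?_, fun i => ?_⟩,
    (smul_inv_smul₀ hs a).symm⟩
  · simp only [hsq, ← Finset.sum_div, div_self ha.ne']
  · have : Nonempty n := ⟨i⟩
    refine Real.abs_le_sqrt ?_
    rw [hsq, div_le_div_iff₀ ha (Nat.cast_pos.2 Fintype.card_pos)]
    exact h i

theorem exists_smul_isIncoherentUnit_of_sq_mem_Icc [Nonempty n] {a : n → ℝ} {c : ℝ} (hc : 0 < c)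
    (h : ∀ i, a i ^ 2 ∈ Set.Icc c (μ * c)) :
    ∃ (s : ℝ) (x : n → ℝ), 0 ≤ s ∧ IsIncoherentUnit μ x ∧ a = s • x := by
  have hμ : 0 ≤ μ :=
    let ⟨i⟩ := ‹Nonempty n›
    nonneg_of_mul_nonneg_left ((sq_nonneg (a i)).trans (h i).2) hc
  have hsum : Fintype.card n * c ≤ ∑ i, a i ^ 2 := by
    simpa using Finset.card_nsmul_le_sum Finset.univ _ c fun i _ => (h i).1
  have hcard : (0 : ℝ) < Fintype.card n := Nat.cast_pos.2 Fintype.card_pos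
  refine exists_smul_isIncoherentUnit ((mul_pos hcard hc).trans_le hsum) fun i => ?_
  calc a i ^ 2 * Fintype.card n ≤ μ * c * Fintype.card n := by gcongr; exact (h i).2
    _ = μ * (Fintype.card n * c) := by ring
    _ ≤ μ * ∑ i, a i ^ 2 := by gcongr

theorem isIncoherentRankOne_vecMulVec_of_sq_mem_Icc [Nonempty m] [Nonempty n]
    {a : m → ℝ} {b : n → ℝ} {c d : ℝ} (hc : 0 < c) (ha : ∀ i, a i ^ 2 ∈ Set.Icc c (μ * c))
    (hd : 0 < d) (hb : ∀ j, b j ^ 2 ∈ Set.Icc d (μ * d)) :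
    IsIncoherentRankOne μ (vecMulVec a b) := by
  obtain ⟨s, x, hs, hx, rfl⟩ := exists_smul_isIncoherentUnit_of_sq_mem_Icc hc ha
  obtain ⟨t, y, ht, hy, rfl⟩ := exists_smul_isIncoherentUnit_of_sq_mem_Icc hd hb
  refine ⟨s * t, x, y, mul_nonneg hs ht, hx, hy, ?_⟩
  simp only [vecMulVec_smul, smul_vecMulVec, smul_smul, mul_comm]

end Incoherence

theorem stmt5_general {m n : Type*} [Fintype m] [Fintype n] [Nonempty m] [Nonempty n] {ε : ℝ}
    (hε : 0 < ε) :
    ∃ P Q : Matrix m n ℝ,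
      P ≠ Q ∧ IsIncoherentRankOne (1 + ε) P ∧ IsIncoherentRankOne (1 + ε) Q ∧
      maxNorm (P - Q) ^ 2 / frobNorm (P - Q) ^ 2 = 1 / Fintype.card n := by
  classical
  let i₀ : m := Classical.arbitrary m
  let c : ℝ := √(1 + ε) - 1
  have hc : c ≠ 0 := by simp [c, sub_eq_zero, hε.ne']
  have hone : (1 : ℝ) ^ 2 ∈ Set.Icc 1 ((1 + ε) * 1) := by simp [hε.le]
  have hscaled (i : m) : (1 + Pi.single i₀ c : m → ℝ) i ^ 2 ∈ Set.Icc 1 ((1 + ε) * 1) := by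
    obtain rfl | hi := eq_or_ne i i₀
    · simp [c, Real.sq_sqrt (by positivity : 0 ≤ 1 + ε), hε.le]
    · simp [hi, hε.le]
  have hdiff : vecMulVec (1 + Pi.single i₀ c : m → ℝ) (1 : n → ℝ) - vecMulVec 1 1 =
      vecMulVec (Pi.single i₀ c) 1 := by
    rw [add_vecMulVec, add_sub_cancel_left]
  refine ⟨vecMulVec (1 + Pi.single i₀ c) 1, vecMulVec 1 1, fun heq => ?_,
    isIncoherentRankOne_vecMulVec_of_sq_mem_Icc one_pos hscaled one_pos fun _ => hone,
    isIncoherentRankOne_vecMulVec_of_sq_mem_Icc one_pos (fun _ => hone) one_pos fun _ => hone, ?_⟩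
  · have hzero := hdiff.symm.trans (sub_eq_zero.2 heq)
    simp [hc] at hzero
  · rw [hdiff, maxNorm_sq_div_frobNorm_sq_vecMulVec_single i₀ hc]
    simp

/-- optimality of the separation lemma — there exist two distinct
(1+ε)-incoherent rank-one matrices whose difference has
‖Δ‖_max²/‖Δ‖_F² ≥ 1/(2p). -/
theorem stmt5 (ε : ℝ) (hε : 0 < ε) (p : ℕ) (hp : 2 ≤ p) :
    ∃ (P Q : Matrix (Fin p) (Fin p) ℝ) (σ₁ σ₂ : ℝ) (x₁ y₁ x₂ y₂ : Fin p → ℝ),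
      P ≠ Q ∧ 0 ≤ σ₁ ∧ 0 ≤ σ₂ ∧
      (∑ i, (x₁ i) ^ 2) = 1 ∧ (∑ i, (y₁ i) ^ 2) = 1 ∧
      (∑ i, (x₂ i) ^ 2) = 1 ∧ (∑ i, (y₂ i) ^ 2) = 1 ∧
      (∀ i, |x₁ i| ≤ Real.sqrt ((1 + ε) / p)) ∧
      (∀ i, |y₁ i| ≤ Real.sqrt ((1 + ε) / p)) ∧
      (∀ i, |x₂ i| ≤ Real.sqrt ((1 + ε) / p)) ∧
      (∀ i, |y₂ i| ≤ Real.sqrt ((1 + ε) / p)) ∧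
      P = Matrix.of (fun i j => σ₁ * x₁ i * y₁ j) ∧
      Q = Matrix.of (fun i j => σ₂ * x₂ i * y₂ j) ∧
      1 / (2 * (p : ℝ)) ≤ maxNorm (P - Q) ^ 2 / frobNorm (P - Q) ^ 2 := by
  have : NeZero p := ⟨by omega⟩
  obtain ⟨P, Q, hne, ⟨σ₁, x₁, y₁, hσ₁, hx₁, hy₁, hP⟩, ⟨σ₂, x₂, y₂, hσ₂, hx₂, hy₂, hQ⟩, hratio⟩ :=
    stmt5_general (m := Fin p) (n := Fin p) hε
  simp only [IsIncoherentUnit, Fintype.card_fin] at hx₁ hy₁ hx₂ hy₂ hratio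
  refine ⟨P, Q, σ₁, σ₂, x₁, y₁, x₂, y₂, hne, hσ₁, hσ₂, hx₁.1, hy₁.1, hx₂.1, hy₂.1,
    hx₁.2, hy₁.2, hx₂.2, hy₂.2, hP, hQ, ?_⟩
  rw [hratio]
  gcongr
  linarith
end

section
/- Let p > r ≥ 2 be integers and μ > 0 with μ r ≤ p/8. Let U, V, L, R ∈ O_{p,r} all be μ-incoherent. Suppose the first rows satisfy Uᵀe₁ = a·e₁ and Lᵀe₁ = b·e₁ for reals a, b with 0 ≤ a ≤ b. Then r − ⟨UᵀL, VᵀR⟩ ≥ (p/(32 μ r³))·a²·(R_{1,1} − V_{1,1})², where R_{1,1} and V_{1,1} are the (1,1) entries of R and V, and ⟨A,B⟩ = Tr(A Bᵀ) is the Frobenius inner product. -/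
open Matrix
open scoped BigOperators RealInnerProductSpace

/-!
For matrices with orthonormal columns, `2 (r - ⟨Uᵀ L, Vᵀ R⟩) = ‖U Vᵀ - L Rᵀ‖²` in the Frobenius
norm; call this `2δ`. If the `i`-th rows of `U` and `L` are `a eⱼ` and `b eⱼ`, then the `i`-th row
of `U Vᵀ - L Rᵀ` is `a v - b w`, where the unit vectors `v` and `w` are the `j`-th columns of `V`
and `R`, and `a ≤ b` gives `a ‖v - w‖ ≤ ‖a v - b w‖`.

To gain the factor `μ r / p`, split `w - v` along the column space of `V`. By Cauchy–Schwarz an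
entry of the projected part is at most `‖v - w‖` times the norm of a row of `V`. The orthogonal
part is a column of `R - V Vᵀ R`, whose squared Frobenius norm is at most `2δ`, and here the small
factor is `a`, which is the norm of a row of `U`.
-/

theorem sq_mul_norm_sub_sq_le_norm_smul_sub_smul_sq {E : Type*} [NormedAddCommGroup E]
    [InnerProductSpace ℝ E] {v w : E} (hvw : ‖v‖ ≤ ‖w‖) {a b : ℝ} (ha : 0 ≤ a) (hab : a ≤ b) :
    a ^ 2 * ‖v - w‖ ^ 2 ≤ ‖a • v - b • w‖ ^ 2 := by
  have hinner : inner ℝ v w ≤ ‖w‖ ^ 2 := calc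
    inner ℝ v w ≤ ‖v‖ * ‖w‖ := real_inner_le_norm v w
    _ ≤ ‖w‖ * ‖w‖ := by gcongr
    _ = ‖w‖ ^ 2 := (sq _).symm
  have hdiff : ‖a • v - b • w‖ ^ 2 - a ^ 2 * ‖v - w‖ ^ 2 =
      (b - a) * ((b - a) * ‖w‖ ^ 2 + 2 * a * (‖w‖ ^ 2 - inner ℝ v w)) := by
    simp only [norm_sub_sq_real, norm_smul, real_inner_smul_left, real_inner_smul_right, mul_pow,
      Real.norm_eq_abs, sq_abs]
    ring
  have hb : 0 ≤ b - a := sub_nonneg.2 hab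
  have hw : 0 ≤ 2 * a * (‖w‖ ^ 2 - inner ℝ v w) :=
    mul_nonneg (by positivity) (sub_nonneg.2 hinner)
  rw [← sub_nonneg, hdiff]
  exact mul_nonneg hb (add_nonneg (mul_nonneg hb (sq_nonneg _)) hw)

section Entries

variable {l m n : Type*}

theorem sq_apply_le_sum_sq_row [Fintype n] (A : Matrix m n ℝ) (i : m) (j : n) :
    A i j ^ 2 ≤ ∑ k, A i k ^ 2 :=
  Finset.single_le_sum (f := fun k => A i k ^ 2) (fun _ _ => sq_nonneg _) (Finset.mem_univ j)

theorem sq_mul_apply_le [Fintype m] (A : Matrix l m ℝ) (B : Matrix m n ℝ) (i : l) (j : n) :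
    (A * B) i j ^ 2 ≤ (∑ k, A i k ^ 2) * ∑ k, B k j ^ 2 :=
  Finset.sum_mul_sq_le_sq_mul_sq _ _ _

theorem transpose_mul_self_apply_self [Fintype m] (A : Matrix m n ℝ) (j : n) :
    (Aᵀ * A) j j = ∑ i, A i j ^ 2 := by
  simp only [Matrix.mul_apply, transpose_apply, sq]

end Entries

section FrobeniusInner

variable {k l m n : Type*} [Fintype k] [Fintype l] [Fintype m] [Fintype n]

theorem frobInner_eq_trace_mul_transpose (A B : Matrix m n ℝ) :
    frobInner A B = (A * Bᵀ).trace :=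
  sum_hadamard_eq A B

theorem frobInner_eq_trace_transpose_mul (A B : Matrix m n ℝ) :
    frobInner A B = (Aᵀ * B).trace := by
  rw [frobInner_eq_trace_mul_transpose, ← trace_transpose_mul, transpose_transpose]

theorem frobInner_self_nonneg (A : Matrix m n ℝ) : 0 ≤ frobInner A A :=
  Finset.sum_nonneg fun i _ => Finset.sum_nonneg fun j _ => mul_self_nonneg (A i j)

theorem frobInner_sub_self (A B : Matrix m n ℝ) :
    frobInner (A - B) (A - B) = frobInner A A + frobInner B B - 2 * frobInner A B := by
  simp only [frobInner, Finset.mul_sum, ← Finset.sum_add_distrib, ← Finset.sum_sub_distrib,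
    Matrix.sub_apply]
  exact Finset.sum_congr rfl fun i _ => Finset.sum_congr rfl fun j _ => by ring

theorem sum_sq_row_le_frobInner_self (A : Matrix m n ℝ) (i : m) :
    ∑ j, A i j ^ 2 ≤ frobInner A A := by
  simp only [frobInner, ← sq]
  exact Finset.single_le_sum (f := fun i => ∑ j, A i j ^ 2)
    (fun _ _ => Finset.sum_nonneg fun _ _ => sq_nonneg _) (Finset.mem_univ i)

theorem frobInner_mul_transpose_mul_transpose (U : Matrix m k ℝ) (V : Matrix n k ℝ)
    (L : Matrix m l ℝ) (R : Matrix n l ℝ) :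
    frobInner (U * Vᵀ) (L * Rᵀ) = frobInner (Uᵀ * L) (Vᵀ * R) := by
  rw [frobInner_eq_trace_transpose_mul, frobInner_eq_trace_mul_transpose]
  simp only [transpose_mul, transpose_transpose]
  rw [Matrix.mul_assoc, trace_mul_comm]
  simp only [Matrix.mul_assoc]

end FrobeniusInner

section OrthonormalColumns

variable {l m n : Type*} [Fintype m] [DecidableEq n]

theorem norm_toLp_col_of_transpose_mul_self_eq_one {U : Matrix m n ℝ} (hU : Uᵀ * U = 1) (j : n) :
    ‖WithLp.toLp 2 (U.col j)‖ = 1 := by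
  rw [← sq_eq_sq₀ (norm_nonneg _) zero_le_one, EuclideanSpace.real_norm_sq_eq]
  simpa [hU] using (transpose_mul_self_apply_self U j).symm

variable [Fintype n]

theorem frobInner_self_of_transpose_mul_self_eq_one {U : Matrix m n ℝ} (hU : Uᵀ * U = 1) :
    frobInner U U = Fintype.card n := by
  rw [frobInner_eq_trace_transpose_mul, hU, trace_one]

theorem transpose_mul_self_sub_proj {V : Matrix m n ℝ} (hV : Vᵀ * V = 1) (W : Matrix m l ℝ) :
    (W - V * (Vᵀ * W))ᵀ * (W - V * (Vᵀ * W)) = Wᵀ * W - (Vᵀ * W)ᵀ * (Vᵀ * W) := by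
  have horth : Vᵀ * (W - V * (Vᵀ * W)) = 0 := by
    rw [Matrix.mul_sub, ← Matrix.mul_assoc, hV, Matrix.one_mul, sub_self]
  rw [transpose_sub, transpose_mul V, Matrix.sub_mul, Matrix.mul_assoc, horth, Matrix.mul_zero,
    sub_zero, Matrix.mul_sub, transpose_mul Vᵀ, transpose_transpose]
  simp only [Matrix.mul_assoc]

theorem sum_sq_col_transpose_mul_le {V : Matrix m n ℝ} (hV : Vᵀ * V = 1) (W : Matrix m l ℝ)
    (j : l) : ∑ k, (Vᵀ * W) k j ^ 2 ≤ ∑ i, W i j ^ 2 := by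
  have hpyth := congrFun₂ (transpose_mul_self_sub_proj hV W) j j
  rw [Matrix.sub_apply] at hpyth
  simp only [transpose_mul_self_apply_self] at hpyth
  exact sub_nonneg.1 (hpyth ▸ Finset.sum_nonneg fun _ _ => sq_nonneg _)

variable [Fintype l]

theorem frobInner_self_sub_proj {V : Matrix m n ℝ} (hV : Vᵀ * V = 1) (W : Matrix m l ℝ) :
    frobInner (W - V * (Vᵀ * W)) (W - V * (Vᵀ * W)) =
      frobInner W W - frobInner (Vᵀ * W) (Vᵀ * W) := by
  simp only [frobInner_eq_trace_transpose_mul]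
  rw [transpose_mul_self_sub_proj hV, trace_sub]

theorem frobInner_self_mul_transpose_sub {U L : Matrix m n ℝ} {V R : Matrix l n ℝ}
    (hU : Uᵀ * U = 1) (hV : Vᵀ * V = 1) (hL : Lᵀ * L = 1) (hR : Rᵀ * R = 1) :
    frobInner (U * Vᵀ - L * Rᵀ) (U * Vᵀ - L * Rᵀ) =
      2 * (Fintype.card n - frobInner (Uᵀ * L) (Vᵀ * R)) := by
  have hone : frobInner (1 : Matrix n n ℝ) 1 = Fintype.card n :=
    frobInner_self_of_transpose_mul_self_eq_one (by simp)
  simp only [frobInner_sub_self, frobInner_mul_transpose_mul_transpose, hU, hV, hL, hR, hone]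
  ring

theorem frobInner_self_sub_proj_le {U L : Matrix m n ℝ} {V R : Matrix l n ℝ}
    (hU : Uᵀ * U = 1) (hV : Vᵀ * V = 1) (hL : Lᵀ * L = 1) (hR : Rᵀ * R = 1) :
    frobInner (R - V * (Vᵀ * R)) (R - V * (Vᵀ * R)) ≤
      2 * (Fintype.card n - frobInner (Uᵀ * L) (Vᵀ * R)) := by
  have hUL := frobInner_self_sub_proj hU L
  have hVR := frobInner_self_sub_proj hV R
  have hdiff := frobInner_sub_self (Uᵀ * L) (Vᵀ * R)
  rw [frobInner_self_of_transpose_mul_self_eq_one hL] at hUL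
  rw [frobInner_self_of_transpose_mul_self_eq_one hR] at hVR
  linarith [frobInner_self_nonneg (L - U * (Uᵀ * L)),
    frobInner_self_nonneg (Uᵀ * L - Vᵀ * R)]

section AlignedRow

variable {U L : Matrix m n ℝ} {V R : Matrix l n ℝ} {i : m} {j : n} {a b : ℝ}

theorem sq_mul_sum_sq_col_sub_le_of_aligned_row (hU : Uᵀ * U = 1) (hV : Vᵀ * V = 1)
    (hL : Lᵀ * L = 1) (hR : Rᵀ * R = 1) (ha : 0 ≤ a) (hab : a ≤ b)
    (hUrow : ∀ j', U i j' = if j' = j then a else 0)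
    (hLrow : ∀ j', L i j' = if j' = j then b else 0) :
    a ^ 2 * ∑ k, (R - V) k j ^ 2 ≤ 2 * (Fintype.card n - frobInner (Uᵀ * L) (Vᵀ * R)) := by
  have hnorm : ‖WithLp.toLp 2 (V.col j)‖ ≤ ‖WithLp.toLp 2 (R.col j)‖ := by
    rw [norm_toLp_col_of_transpose_mul_self_eq_one hV,
      norm_toLp_col_of_transpose_mul_self_eq_one hR]
  have hcol := sq_mul_norm_sub_sq_le_norm_smul_sub_smul_sq hnorm ha hab
  rw [norm_sub_rev] at hcol
  have hrow (k : l) : (U * Vᵀ - L * Rᵀ) i k = a * V k j - b * R k j := by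
    simp [Matrix.mul_apply, hUrow, hLrow]
  calc a ^ 2 * ∑ k, (R - V) k j ^ 2
      ≤ ∑ k, (a * V k j - b * R k j) ^ 2 := by
        simpa [EuclideanSpace.real_norm_sq_eq] using hcol
    _ = ∑ k, (U * Vᵀ - L * Rᵀ) i k ^ 2 := by simp only [hrow]
    _ ≤ frobInner (U * Vᵀ - L * Rᵀ) (U * Vᵀ - L * Rᵀ) := sum_sq_row_le_frobInner_self _ i
    _ = 2 * (Fintype.card n - frobInner (Uᵀ * L) (Vᵀ * R)) :=
        frobInner_self_mul_transpose_sub hU hV hL hR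

theorem sq_mul_sq_sub_apply_le_of_aligned_row (hU : Uᵀ * U = 1) (hV : Vᵀ * V = 1)
    (hL : Lᵀ * L = 1) (hR : Rᵀ * R = 1) (ha : 0 ≤ a) (hab : a ≤ b)
    (hUrow : ∀ j', U i j' = if j' = j then a else 0)
    (hLrow : ∀ j', L i j' = if j' = j then b else 0) (k : l) :
    a ^ 2 * (R k j - V k j) ^ 2 ≤
      4 * (a ^ 2 + ∑ j', V k j' ^ 2) * (Fintype.card n - frobInner (Uᵀ * L) (Vᵀ * R)) := by
  set δ := Fintype.card n - frobInner (Uᵀ * L) (Vᵀ * R)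
  set orthPart := (R - V * (Vᵀ * R)) k j
  set projPart := (V * (Vᵀ * (R - V))) k j
  have hsplit : R k j - V k j = orthPart + projPart := by
    simp only [orthPart, projPart, Matrix.mul_sub, hV, Matrix.mul_one, Matrix.sub_apply]
    ring
  have horth : orthPart ^ 2 ≤ 2 * δ := calc
    orthPart ^ 2 ≤ ∑ j', (R - V * (Vᵀ * R)) k j' ^ 2 :=
      sq_apply_le_sum_sq_row (R - V * (Vᵀ * R)) k j
    _ ≤ frobInner (R - V * (Vᵀ * R)) (R - V * (Vᵀ * R)) := sum_sq_row_le_frobInner_self _ k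
    _ ≤ 2 * δ := frobInner_self_sub_proj_le hU hV hL hR
  have hproj : a ^ 2 * projPart ^ 2 ≤ (∑ j', V k j' ^ 2) * (2 * δ) := calc
    a ^ 2 * projPart ^ 2
      ≤ a ^ 2 * ((∑ j', V k j' ^ 2) * ∑ j', (Vᵀ * (R - V)) j' j ^ 2) := by
        gcongr; exact sq_mul_apply_le _ _ k j
    _ ≤ a ^ 2 * ((∑ j', V k j' ^ 2) * ∑ k', (R - V) k' j ^ 2) := by
        gcongr; exact sum_sq_col_transpose_mul_le hV _ j
    _ = (∑ j', V k j' ^ 2) * (a ^ 2 * ∑ k', (R - V) k' j ^ 2) := by ring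
    _ ≤ (∑ j', V k j' ^ 2) * (2 * δ) :=
        mul_le_mul_of_nonneg_left
          (sq_mul_sum_sq_col_sub_le_of_aligned_row hU hV hL hR ha hab hUrow hLrow)
          (Finset.sum_nonneg fun _ _ => sq_nonneg _)
  calc a ^ 2 * (R k j - V k j) ^ 2
      ≤ a ^ 2 * (2 * (orthPart ^ 2 + projPart ^ 2)) := by rw [hsplit]; gcongr; exact add_sq_le
    _ = 2 * (a ^ 2 * orthPart ^ 2 + a ^ 2 * projPart ^ 2) := by ring
    _ ≤ 2 * (a ^ 2 * (2 * δ) + (∑ j', V k j' ^ 2) * (2 * δ)) := by gcongr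
    _ = 4 * (a ^ 2 + ∑ j', V k j' ^ 2) * δ := by ring

end AlignedRow

end OrthonormalColumns

section Incoherent

variable {p r : ℕ} {μ : ℝ}

theorem Incoherent.sum_sq_row_le {U : Matrix (Fin p) (Fin r) ℝ} (hU : Incoherent μ U)
    (hμ : 0 ≤ μ) (i : Fin p) : ∑ j, U i j ^ 2 ≤ μ * r / p :=
  (Real.sqrt_le_sqrt_iff (by positivity)).1 (hU i)

theorem stmt8_general (hμ : 0 < μ) {U V L R : Matrix (Fin p) (Fin r) ℝ}
    (hUo : Uᵀ * U = 1) (hVo : Vᵀ * V = 1) (hLo : Lᵀ * L = 1) (hRo : Rᵀ * R = 1)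
    (hUi : Incoherent μ U) (hVi : Incoherent μ V) {a b : ℝ} (ha : 0 ≤ a) (hab : a ≤ b)
    {i : Fin p} {j : Fin r} (hUrow : ∀ j', U i j' = if j' = j then a else 0)
    (hLrow : ∀ j', L i j' = if j' = j then b else 0) (k : Fin p) :
    (p / (8 * μ * r)) * a ^ 2 * (R k j - V k j) ^ 2 ≤ r - frobInner (Uᵀ * L) (Vᵀ * R) := by
  have hp : (0 : ℝ) < p := by exact_mod_cast i.pos
  have hr : (0 : ℝ) < r := by exact_mod_cast j.pos
  have hentry := sq_mul_sq_sub_apply_le_of_aligned_row hUo hVo hLo hRo ha hab hUrow hLrow k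
  have hgap := frobInner_self_mul_transpose_sub hUo hVo hLo hRo
  rw [Fintype.card_fin] at hentry hgap
  have hδ : 0 ≤ r - frobInner (Uᵀ * L) (Vᵀ * R) := by
    linarith [frobInner_self_nonneg (U * Vᵀ - L * Rᵀ)]
  have haκ : a ^ 2 ≤ μ * r / p := by
    simpa [hUrow] using (sq_apply_le_sum_sq_row U i j).trans (hUi.sum_sq_row_le hμ.le i)
  have hVκ := hVi.sum_sq_row_le hμ.le k
  calc (p / (8 * μ * r)) * a ^ 2 * (R k j - V k j) ^ 2
      = (p / (8 * μ * r)) * (a ^ 2 * (R k j - V k j) ^ 2) := mul_assoc _ _ _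
    _ ≤ (p / (8 * μ * r)) * (4 * (a ^ 2 + ∑ j', V k j' ^ 2) *
          (r - frobInner (Uᵀ * L) (Vᵀ * R))) := mul_le_mul_of_nonneg_left hentry (by positivity)
    _ ≤ (p / (8 * μ * r)) * (4 * (μ * r / p + μ * r / p) *
          (r - frobInner (Uᵀ * L) (Vᵀ * R))) := by gcongr
    _ = r - frobInner (Uᵀ * L) (Vᵀ * R) := by field_simp; ring

end Incoherent

/-- discrepancy lemma for the first entries of the right singular
vectors — r − ⟨UᵀL, VᵀR⟩ ≥ (p/(32μr³))·a²·(R₁₁ − V₁₁)². -/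
theorem stmt8 (p r : ℕ) (hr2 : 2 ≤ r) (hrp : r < p)
    (μ : ℝ) (hμ : 0 < μ) (hμr : μ * (r : ℝ) ≤ (p : ℝ) / 8)
    (U V L R : Matrix (Fin p) (Fin r) ℝ)
    (hUo : Uᵀ * U = 1) (hVo : Vᵀ * V = 1) (hLo : Lᵀ * L = 1) (hRo : Rᵀ * R = 1)
    (hUi : Incoherent μ U) (hVi : Incoherent μ V)
    (hLi : Incoherent μ L) (hRi : Incoherent μ R)
    (a b : ℝ) (ha : 0 ≤ a) (hab : a ≤ b)
    (hUrow : ∀ j : Fin r, U ⟨0, by omega⟩ j = if j = ⟨0, by omega⟩ then a else 0)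
    (hLrow : ∀ j : Fin r, L ⟨0, by omega⟩ j = if j = ⟨0, by omega⟩ then b else 0) :
    (r : ℝ) - frobInner (Uᵀ * L) (Vᵀ * R) ≥
      ((p : ℝ) / (32 * μ * (r : ℝ) ^ 3)) * a ^ 2 *
        (R ⟨0, by omega⟩ (⟨0, by omega⟩ : Fin r) -
          V ⟨0, by omega⟩ (⟨0, by omega⟩ : Fin r)) ^ 2 := by
  refine le_trans ?_ (stmt8_general hμ hUo hVo hLo hRo hUi hVi ha hab hUrow hLrow ⟨0, by omega⟩)
  gcongr
  · norm_num
  · exact le_self_pow₀ (by exact_mod_cast one_le_two.trans hr2) three_ne_zero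
end
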